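/- arXiv:2407.10478 — 2 statements merged into one kernel-verified Lean document; each statement's English description precedes it below -/
import Mathlib

section
/- Let 2 ≤ k < n and let H : ℝ → Herm(n) be real-analytic in a neighborhood of 0 with H(0) ∈ Σ_k. Then for all sufficiently small t, d(H(t), Σ_k)² = Σ_{j=1}^k (λ_j(H(t)) − λ̄(t))², where λ̄(t) is the mean of the lowest k eigenvalues of H(t); the function t ↦ d(H(t), Σ_k)² is real-analytic at 0; and if λ̃_1,…,λ̃_k are real-analytic functions near 0 whose values {λ̃_1(t),…,λ̃_k(t)} form, for each small t, the multiset of the lowest k eigenvalues of H(t), then ord₀(t ↦ d(H(t), Σ_k)²) = 2 · min_{1≤i<j≤k} ord₀(λ̃_i − λ̃_j), i.e., the order of distancing from Σ_k equals the order of energy splitting. -/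
/-!
By the Hoffman–Wielandt inequality, the matrix of `Σ_k` nearest to a Hermitian `H` with a gap above
its `k` lowest eigenvalues arises by collapsing these to their mean, so the squared distance is
their sum of squared deviations.

The individual eigenvalues need not be analytic in a parameter, but their power sums are: for `c`
in the gap, `∑_{j ≤ k} (c - λ_j) ^ m = tr ((H - c)⁻ ^ m)`, and the negative part
`(|H - c| - (H - c)) / 2` is analytic because `H - c` is invertible and `|·| = √(·²)`, where the
square root is the local inverse of `X ↦ X²` at a positive definite matrix (Sylvester's equation).

For an analytic choice `λ̃` of the eigenvalues, the sum of squared deviations is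
`(1 / 2k) ∑_{i,j} (λ̃_i - λ̃_j)²`, and the leading terms of a sum of squares cannot cancel.
-/

open Matrix

attribute [local instance] Matrix.normedAddCommGroup Matrix.normedSpace

noncomputable section

/-- Sorted eigenvalues (increasing, counted with multiplicity) of a Hermitian matrix
(junk value for non-Hermitian matrices). -/
def eigs {n : ℕ} (H : Matrix (Fin n) (Fin n) ℂ) : Fin n → ℝ :=
  if hH : H.IsHermitian then hH.eigenvalues ∘ Tuple.sort hH.eigenvalues else fun _ => 0

/-- Frobenius norm of a complex matrix. -/
def frobNorm {n : ℕ} (M : Matrix (Fin n) (Fin n) ℂ) : ℝ :=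
  Real.sqrt (∑ a, ∑ b, ‖M a b‖ ^ 2)

/-- Mean of the lowest k eigenvalues. -/
def lamBar {n : ℕ} (k : ℕ) (H : Matrix (Fin n) (Fin n) ℂ) : ℝ :=
  (∑ j : Fin n, if (j : ℕ) < k then eigs H j else 0) / k

/-- The set Σ_k of k-fold ground-state degenerate Hermitian matrices:
λ₁ = … = λ_k < λ_{k+1}. -/
def SigmaSet (n k : ℕ) : Set (Matrix (Fin n) (Fin n) ℂ) :=
  {H | H.IsHermitian ∧ (∀ i j : Fin n, (i : ℕ) < k → (j : ℕ) < k → eigs H i = eigs H j) ∧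
    ∀ i j : Fin n, (i : ℕ) < k → (j : ℕ) = k → eigs H i < eigs H j}

/-- Order of vanishing of a function at `0 ∈ ℝ`. -/
def ord0 (f : ℝ → ℝ) : ℕ∞ :=
  sInf {m : ℕ∞ | ∃ j : ℕ, m = (j : ℕ∞) ∧ iteratedDeriv j f 0 ≠ 0}

section SquaredDeviation

variable {ι κ : Type*} [Fintype ι] [Fintype κ]

/-- The sum of the squared deviations of a finite family of reals from its mean; for the
lowest eigenvalues of a matrix, its squared distance to `SigmaSet`. -/
def sqDev (x : ι → ℝ) : ℝ :=
  ∑ i, (x i - (∑ j, x j) / Fintype.card ι) ^ 2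

lemma sqDev_eq_sub (x : ι → ℝ) (c : ℝ) :
    sqDev x = ∑ i, (x i - c) ^ 2 - (∑ i, (x i - c)) ^ 2 / Fintype.card ι := by
  rcases isEmpty_or_nonempty ι with _ | _
  · simp [sqDev]
  have hcard : (Fintype.card ι : ℝ) ≠ 0 := by simp
  simp only [sqDev, sub_sq, Finset.sum_add_distrib, Finset.sum_sub_distrib, ← Finset.sum_mul,
    ← Finset.mul_sum, Finset.sum_const, Finset.card_univ, nsmul_eq_mul]
  field_simp
  ring

lemma sqDev_le (x : ι → ℝ) (c : ℝ) : sqDev x ≤ ∑ i, (x i - c) ^ 2 := by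
  rw [sqDev_eq_sub x c]
  exact sub_le_self _ (by positivity)

lemma sqDev_eq_sum_sq_sub (x : ι → ℝ) :
    sqDev x = (2 * Fintype.card ι : ℝ)⁻¹ * ∑ p : ι × ι, (x p.1 - x p.2) ^ 2 := by
  rcases isEmpty_or_nonempty ι with _ | _
  · simp [sqDev]
  have hcard : (Fintype.card ι : ℝ) ≠ 0 := by simp
  simp only [sqDev, Fintype.sum_prod_type, sub_sq, Finset.sum_add_distrib,
    Finset.sum_sub_distrib, ← Finset.sum_mul, ← Finset.mul_sum, Finset.sum_const,
    Finset.card_univ, nsmul_eq_mul]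
  field_simp
  ring

lemma sqDev_eq_of_map_univ_eq {x : ι → ℝ} {y : κ → ℝ}
    (h : Finset.univ.val.map x = Finset.univ.val.map y) : sqDev x = sqDev y := by
  have sum_eq (φ : ℝ → ℝ) : ∑ i, φ (x i) = ∑ i, φ (y i) := by
    simpa only [Multiset.map_map] using! congrArg (fun s => (s.map φ).sum) h
  have card_eq : Fintype.card ι = Fintype.card κ := by simpa using congrArg Multiset.card h
  rw [sqDev_eq_sub x 0, sqDev_eq_sub y 0, sum_eq fun a => (a - 0) ^ 2, sum_eq fun a => a - 0,
    card_eq]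

end SquaredDeviation

section AnalyticOrder

open Asymptotics Filter Topology

variable {𝕜 E : Type*} [NontriviallyNormedField 𝕜] [NormedAddCommGroup E] [NormedSpace 𝕜 E]

lemma natCast_le_analyticOrderAt_iff_isBigO {f : 𝕜 → E} {z : 𝕜} (hf : AnalyticAt 𝕜 f z)
    {m : ℕ} : m ≤ analyticOrderAt f z ↔ f =O[𝓝 z] fun w => (w - z) ^ m := by
  constructor
  · rw [natCast_le_analyticOrderAt hf]
    rintro ⟨g, hg, hfg⟩
    have : (fun w => (w - z) ^ m • g w) =O[𝓝 z] fun w => (w - z) ^ m • (1 : 𝕜) :=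
      (isBigO_refl _ _).smul (hg.continuousAt.isBigO_one 𝕜)
    simpa only [smul_eq_mul, mul_one] using EventuallyEq.trans_isBigO hfg this
  · intro hO
    by_contra! hlt
    obtain ⟨l, hl⟩ := ENat.ne_top_iff_exists.1 hlt.ne_top
    obtain ⟨g, hg, hgz, hfg⟩ := hf.analyticOrderAt_eq_natCast.1 hl.symm
    have hlm : l < m := by rw [← hl] at hlt; exact_mod_cast hlt
    have g_away : (fun _ => (1 : 𝕜)) =O[𝓝 z] g :=
      isBigO_const_left_iff_pos_le_norm one_ne_zero |>.2
        ⟨‖g z‖ / 2, by positivity, hg.continuousAt.norm.eventually_const_le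
          (half_lt_self (norm_pos_iff.2 hgz))⟩
    have pow_isBigO : (fun w => (w - z) ^ l) =O[𝓝 z] f := by
      simpa using ((isBigO_refl (fun w => (w - z) ^ l) (𝓝 z)).smul g_away).trans_eventuallyEq
        (EventuallyEq.symm hfg)
    have sub_tendsto : Tendsto (fun w => w - z) (𝓝 z) (𝓝 0) := by
      simpa using (continuous_sub_right z).tendsto z
    have pow_isLittleO : (fun w => (w - z) ^ l) =o[𝓝[≠] z] fun w => (w - z) ^ l :=
      ((pow_isBigO.trans hO).trans_isLittleO
        ((isLittleO_pow_pow hlm).comp_tendsto sub_tendsto)).mono nhdsWithin_le_nhds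
    refine isLittleO_irrefl (Eventually.frequently ?_) pow_isLittleO
    filter_upwards [self_mem_nhdsWithin] with w hw using pow_ne_zero _ (sub_ne_zero.2 hw)

lemma analyticOrderAt_const_mul {f : 𝕜 → 𝕜} {z a : 𝕜} (hf : AnalyticAt 𝕜 f z) (ha : a ≠ 0) :
    analyticOrderAt (fun w => a * f w) z = analyticOrderAt f z := by
  have := analyticOrderAt_mul (f := fun _ => a) analyticAt_const hf
  rwa [analyticAt_const.analyticOrderAt_eq_zero.2 ha, zero_add] at this

variable {ι : Type*} [Fintype ι]

lemma analyticOrderAt_sum_of_nonneg {f : ι → ℝ → ℝ} {z : ℝ} (hf : ∀ i, AnalyticAt ℝ (f i) z)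
    (hnn : ∀ i t, 0 ≤ f i t) :
    analyticOrderAt (fun t => ∑ i, f i t) z = ⨅ i, analyticOrderAt (f i) z := by
  refine ENat.eq_of_forall_natCast_le_iff fun m => ?_
  rw [le_iInf_iff,
    natCast_le_analyticOrderAt_iff_isBigO (Finset.analyticAt_fun_sum _ fun i _ => hf i)]
  simp only [natCast_le_analyticOrderAt_iff_isBigO (hf _)]
  refine ⟨fun h i => (IsBigO.of_norm_le fun t => ?_).trans h, fun h => .fun_sum fun i _ => h i⟩
  rw [Real.norm_of_nonneg (hnn i t)]
  exact Finset.single_le_sum (f := fun i => f i t) (fun i _ => hnn i t) (Finset.mem_univ i)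

lemma analyticOrderAt_sum_sq {g : ι → ℝ → ℝ} {z : ℝ} (hg : ∀ i, AnalyticAt ℝ (g i) z) :
    analyticOrderAt (fun t => ∑ i, g i t ^ 2) z = 2 * ⨅ i, analyticOrderAt (g i) z := by
  rw [analyticOrderAt_sum_of_nonneg (fun i => (hg i).fun_pow 2) fun i t => sq_nonneg (g i t),
    ENat.mul_iInf_of_ne two_ne_zero]
  refine iInf_congr fun i => ?_
  simpa only [nsmul_eq_mul] using! analyticOrderAt_pow (hg i) 2

lemma iInf_lt_eq_iInf_prod {ι α : Type*} [LinearOrder ι] [CompleteLattice α] {φ : ι → ι → α}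
    (symm : ∀ i j, φ i j = φ j i) (diag : ∀ i, φ i i = ⊤) :
    ⨅ (i) (j) (_ : i < j), φ i j = ⨅ p : ι × ι, φ p.1 p.2 := by
  refine le_antisymm (le_iInf fun ⟨i, j⟩ => ?_)
    (le_iInf₂ fun i j => le_iInf fun _ => iInf_le (fun p : ι × ι => φ p.1 p.2) (i, j))
  rcases lt_trichotomy i j with h | rfl | h
  · exact iInf₂_le_of_le i j (iInf_le _ h)
  · simp [diag]
  · exact iInf₂_le_of_le j i ((iInf_le _ h).trans_eq (symm j i))

lemma analyticOrderAt_sqDev {x : ι → ℝ → ℝ} [LinearOrder ι] {z : ℝ}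
    (hx : ∀ i, AnalyticAt ℝ (x i) z) :
    analyticOrderAt (fun t => sqDev fun i => x i t) z =
      2 * ⨅ (i) (j) (_ : i < j), analyticOrderAt (fun t => x i t - x j t) z := by
  rcases isEmpty_or_nonempty ι with _ | _
  · simp [sqDev, analyticOrderAt_eq_top]
  have hsub (p : ι × ι) : AnalyticAt ℝ (fun t => x p.1 t - x p.2 t) z := (hx _).sub (hx _)
  simp only [sqDev_eq_sum_sq_sub]
  rw [analyticOrderAt_const_mul (Finset.analyticAt_fun_sum _ fun p _ => (hsub p).fun_pow 2)
    (by simp), analyticOrderAt_sum_sq hsub, iInf_lt_eq_iInf_prod]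
  · intro i j
    rw [← analyticOrderAt_neg]
    simp [Pi.neg_def]
  · simp [analyticOrderAt_eq_top]

lemma ord0_eq_analyticOrderAt {f : ℝ → ℝ} (hf : AnalyticAt ℝ f 0) :
    ord0 f = analyticOrderAt f 0 := by
  refine ENat.eq_of_forall_natCast_le_iff fun m => ?_
  rw [natCast_le_analyticOrderAt_iff_iteratedDeriv_eq_zero hf, ord0, le_sInf_iff]
  constructor
  · intro hle i hi
    by_contra hne
    exact absurd (hle i ⟨i, rfl, hne⟩) (by exact_mod_cast hi.not_ge)
  · rintro hvanish _ ⟨j, rfl, hj⟩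
    by_contra! hlt
    exact hj (hvanish j (by exact_mod_cast hlt))

end AnalyticOrder

section AnalyticAbs

open scoped MatrixOrder ComplexOrder
open Filter Topology

lemma eq_zero_of_mul_add_mul_eq_zero {m n 𝕜 : Type*} [Fintype m] [Fintype n] [RCLike 𝕜]
    {R : Matrix m m 𝕜} {S : Matrix n n 𝕜} {Y : Matrix m n 𝕜} (hR : R.PosDef) (hS : S.PosSemidef)
    (h : R * Y + Y * S = 0) : Y = 0 := by
  have hYRY : (Yᴴ * R * Y).PosSemidef := hR.posSemidef.conjTranspose_mul_mul_same Y
  have hYSY : (Y * S * Yᴴ).PosSemidef := hS.mul_mul_conjTranspose_same Y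
  have htrace : (Yᴴ * R * Y).trace + (Y * S * Yᴴ).trace = 0 := by
    rw [trace_mul_comm (Y * S), ← trace_add, Matrix.mul_assoc, ← Matrix.mul_add, h,
      Matrix.mul_zero, trace_zero]
  have hYRY_zero : Yᴴ * R * Y = 0 := hYRY.trace_eq_zero_iff.1
    ((add_eq_zero_iff_of_nonneg hYRY.trace_nonneg hYSY.trace_nonneg).1 htrace).1
  refine Matrix.ext_iff_mulVec.2 fun v => ?_
  by_contra hv
  have : 0 < star (Y *ᵥ v) ⬝ᵥ R *ᵥ (Y *ᵥ v) :=
    hR.dotProduct_mulVec_pos (by simpa only [zero_mulVec] using hv)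
  rw [star_mulVec, dotProduct_mulVec, vecMul_vecMul, dotProduct_mulVec, vecMul_vecMul, hYRY_zero,
    vecMul_zero, zero_dotProduct] at this
  exact this.false

variable {ι E : Type*} [Fintype ι] [NormedAddCommGroup E] [NormedSpace ℝ E] {x : E}

lemma analyticAt_matrix_mul {A B : E → Matrix ι ι ℂ} (hA : AnalyticAt ℝ A x)
    (hB : AnalyticAt ℝ B x) : AnalyticAt ℝ (fun y => A y * B y) x :=
  ((LinearMap.mul ℝ (Matrix ι ι ℂ)).toContinuousBilinearMap.analyticAt_bilinear
    (A x, B x)).comp₂ hA hB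

lemma analyticAt_of_mul_self {B : E → Matrix ι ι ℂ} (hcont : ContinuousAt B x)
    (hpos : (B x).PosDef) (hsq : AnalyticAt ℝ (fun y => B y * B y) x) : AnalyticAt ℝ B x := by
  classical
  let D : Matrix ι ι ℂ →ₗ[ℝ] Matrix ι ι ℂ := LinearMap.mulLeft ℝ (B x) + LinearMap.mulRight ℝ (B x)
  have hD : Function.Injective D := (injective_iff_map_eq_zero D).2 fun Y hY =>
    eq_zero_of_mul_add_mul_eq_zero hpos hpos.posSemidef hY
  let e := (LinearEquiv.ofInjectiveEndo D hD).toContinuousLinearEquiv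
  have hderiv : HasFDerivAt (fun X : Matrix ι ι ℂ => X * X)
      (e : Matrix ι ι ℂ →L[ℝ] Matrix ι ι ℂ) (B x) := by
    convert! (LinearMap.mul ℝ (Matrix ι ι ℂ)).toContinuousBilinearMap.hasFDerivAt_of_bilinear
      (hasFDerivAt_id (B x)) (hasFDerivAt_id (B x)) using 1
  have hsmooth : ContDiffAt ℝ (⊤ : WithTop ℕ∞) (fun X : Matrix ι ι ℂ => X * X) (B x) :=
    (analyticAt_matrix_mul analyticAt_id analyticAt_id).contDiffAt
  have hinv : AnalyticAt ℝ (hsmooth.localInverse hderiv (by simp)) (B x * B x) :=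
    (hsmooth.to_localInverse hderiv (by simp)).analyticAt
  refine (AnalyticAt.comp (f := fun y => B y * B y) hinv hsq).congr ?_
  exact hcont.eventually
    (hsmooth.hasStrictFDerivAt' hderiv (by simp)).eventually_left_inverse

open scoped Matrix.Norms.L2Operator Classical in
lemma continuousOn_sqrt_matrix :
    ContinuousOn (CFC.sqrt : Matrix ι ι ℂ → Matrix ι ι ℂ) {A | 0 ≤ A} :=
  CFC.continuousOn_sqrt

variable [DecidableEq ι]

lemma analyticAt_matrix_pow {A : E → Matrix ι ι ℂ} (hA : AnalyticAt ℝ A x) (m : ℕ) :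
    AnalyticAt ℝ (fun y => A y ^ m) x := by
  induction m with
  | zero => simpa only [pow_zero] using analyticAt_const
  | succ m ih => simpa only [pow_succ] using analyticAt_matrix_mul ih hA

lemma posDef_abs_of_isUnit {A : Matrix ι ι ℂ} (hA : IsUnit A) : (CFC.abs A).PosDef := by
  refine (Matrix.nonneg_iff_posSemidef.1 (CFC.abs_nonneg A)).posDef_iff_isUnit.2 ?_
  refine (isUnit_pow_iff two_ne_zero).1 ?_
  rw [pow_two, CFC.abs_mul_abs]
  exact hA.star.mul hA

lemma analyticAt_abs {A : E → Matrix ι ι ℂ} (hA : AnalyticAt ℝ A x) (hu : IsUnit (A x)) :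
    AnalyticAt ℝ (fun y => CFC.abs (A y)) x := by
  let adj : Matrix ι ι ℂ →L[ℝ] Matrix ι ι ℂ :=
    (Matrix.conjTransposeLinearEquiv ι ι ℝ ℂ).toContinuousLinearEquiv
  have hsq : AnalyticAt ℝ (fun y => star (A y) * A y) x :=
    analyticAt_matrix_mul ((adj.analyticAt _).comp hA) hA
  refine analyticAt_of_mul_self ?_ (posDef_abs_of_isUnit hu) (by simpa only [CFC.abs_mul_abs])
  have hnonneg (y : E) : 0 ≤ star (A y) * A y := star_mul_self_nonneg (A y)
  exact (continuousOn_sqrt_matrix _ (hnonneg x)).tendsto.comp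
    (tendsto_nhdsWithin_iff.2 ⟨hsq.continuousAt, .of_forall hnonneg⟩)

lemma analyticAt_negPart {A : E → Matrix ι ι ℂ} (hA : AnalyticAt ℝ A x) (hu : IsUnit (A x))
    (hherm : ∀ᶠ y in 𝓝 x, (A y).IsHermitian) : AnalyticAt ℝ (fun y => (A y)⁻) x := by
  have habs : AnalyticAt ℝ (fun y => (2⁻¹ : ℝ) • (CFC.abs (A y) - A y)) x :=
    ((analyticAt_abs hA hu).fun_sub hA).fun_const_smul
  refine habs.congr ?_
  filter_upwards [hherm] with y hy
  rw [CFC.abs_sub_self (A y) hy, ← Nat.cast_smul_eq_nsmul ℝ, smul_smul]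
  simp

end AnalyticAbs

section UnitaryDiagonal

open Unitary

variable {ι 𝕜 : Type*} [Fintype ι] [DecidableEq ι] [RCLike 𝕜]

/-- The Hermitian matrix `U diag(g) U*`, having the columns of the unitary matrix `U` as
eigenvectors, for the real eigenvalues `g`. -/
def unitaryDiag (U : unitaryGroup ι 𝕜) (g : ι → ℝ) : Matrix ι ι 𝕜 :=
  conjStarAlgAut 𝕜 _ U (diagonal (RCLike.ofReal ∘ g))

lemma unitaryDiag_eq (U : unitaryGroup ι 𝕜) (g : ι → ℝ) :
    unitaryDiag U g = U.1 * diagonal (RCLike.ofReal ∘ g) * star U.1 :=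
  conjStarAlgAut_apply ..

lemma isHermitian_unitaryDiag (U : unitaryGroup ι 𝕜) (g : ι → ℝ) :
    (unitaryDiag U g).IsHermitian := by
  rw [unitaryDiag_eq]
  exact isHermitian_mul_mul_conjTranspose _ (isHermitian_diagonal_iff.2 fun i => by
    simp [isSelfAdjoint_iff])

lemma unitaryDiag_sub (U : unitaryGroup ι 𝕜) (g h : ι → ℝ) :
    unitaryDiag U g - unitaryDiag U h = unitaryDiag U (g - h) := by
  rw [unitaryDiag, unitaryDiag, unitaryDiag, ← map_sub, diagonal_sub]
  congr with i
  simp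

lemma charpoly_unitaryDiag (U : unitaryGroup ι 𝕜) (g : ι → ℝ) :
    (unitaryDiag U g).charpoly = ∏ i, (Polynomial.X - Polynomial.C (g i : 𝕜)) := by
  rw [unitaryDiag_eq, charpoly_mul_comm, ← mul_assoc, star_mul_self_of_mem U.2, one_mul,
    charpoly_diagonal]
  rfl

lemma trace_unitaryDiag (U : unitaryGroup ι 𝕜) (g : ι → ℝ) :
    (unitaryDiag U g).trace = ∑ i, (g i : 𝕜) := by
  rw [unitaryDiag_eq, trace_mul_comm, ← mul_assoc, star_mul_self_of_mem U.2, one_mul,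
    trace_diagonal]
  rfl

lemma exists_unitaryDiag_comp_perm (U : unitaryGroup ι 𝕜) (g : ι → ℝ) (σ : Equiv.Perm ι) :
    ∃ V : unitaryGroup ι 𝕜, unitaryDiag V (g ∘ σ) = unitaryDiag U g := by
  let V : Matrix ι ι 𝕜 := U.1.submatrix id σ
  have hV : V ∈ unitaryGroup ι 𝕜 := by
    rw [mem_unitaryGroup_iff, star_eq_conjTranspose, conjTranspose_submatrix,
      submatrix_mul_equiv, ← star_eq_conjTranspose, mul_star_self_of_mem U.2, submatrix_id_id]
  refine ⟨⟨V, hV⟩, ?_⟩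
  rw [unitaryDiag_eq, unitaryDiag_eq, star_eq_conjTranspose, conjTranspose_submatrix,
    ← Function.comp_assoc, ← submatrix_diagonal_equiv, submatrix_mul_equiv, submatrix_mul_equiv,
    submatrix_id_id, star_eq_conjTranspose]

lemma trace_cfc {A : Matrix ι ι 𝕜} (hA : A.IsHermitian) (f : ℝ → ℝ) :
    (cfc f A).trace = ∑ i, (f (hA.eigenvalues i) : 𝕜) := by
  rw [hA.cfc_eq]
  exact trace_unitaryDiag ..

end UnitaryDiagonal

section HoffmanWielandt

open Unitary

lemma sum_sq_sub_le_sum_sq_sub_comp_perm {ι : Type*} [Fintype ι] {a b : ι → ℝ}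
    (hab : Monovary a b) (σ : Equiv.Perm ι) :
    ∑ i, (a i - b i) ^ 2 ≤ ∑ i, (a i - b (σ i)) ^ 2 := by
  have cross_le := hab.sum_mul_comp_perm_le_sum_mul (σ := σ)
  have sum_sq_perm : ∑ i, b (σ i) ^ 2 = ∑ i, b i ^ 2 := Equiv.sum_comp σ fun i => b i ^ 2
  simp only [sub_sq, Finset.sum_add_distrib, Finset.sum_sub_distrib, mul_assoc,
    ← Finset.mul_sum, sum_sq_perm]
  linarith

variable {ι 𝕜 : Type*} [Fintype ι] [DecidableEq ι] [RCLike 𝕜]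

lemma sum_norm_sq_eq_trace {m n : Type*} [Fintype m] [Fintype n] (M : Matrix m n 𝕜) :
    ((∑ i, ∑ j, ‖M i j‖ ^ 2 : ℝ) : 𝕜) = (Mᴴ * M).trace := by
  simp only [trace, diag_apply, mul_apply, conjTranspose_apply, RCLike.star_def, RCLike.conj_mul]
  rw [Finset.sum_comm]
  push_cast
  rfl

lemma sum_norm_sq_unitary_mul_mul (U V : unitaryGroup ι 𝕜) (M : Matrix ι ι 𝕜) :
    ∑ i, ∑ j, ‖(U.1 * M * V.1) i j‖ ^ 2 = ∑ i, ∑ j, ‖M i j‖ ^ 2 := by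
  rw [← RCLike.ofReal_inj (K := 𝕜), sum_norm_sq_eq_trace, sum_norm_sq_eq_trace]
  calc ((U.1 * M * V.1)ᴴ * (U.1 * M * V.1)).trace
      = (star V.1 * (Mᴴ * (star U.1 * U.1) * M * V)).trace := by
        simp only [conjTranspose_mul, star_eq_conjTranspose, mul_assoc]
    _ = (Mᴴ * M * (V.1 * star V.1)).trace := by
        rw [star_mul_self_of_mem U.2, mul_one, trace_mul_comm, mul_assoc]
    _ = (Mᴴ * M).trace := by rw [mul_star_self_of_mem V.2, mul_one]

lemma sum_norm_sq_unitaryDiag (U : unitaryGroup ι 𝕜) (g : ι → ℝ) :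
    ∑ i, ∑ j, ‖unitaryDiag U g i j‖ ^ 2 = ∑ i, g i ^ 2 := by
  rw [unitaryDiag_eq, ← coe_star, sum_norm_sq_unitary_mul_mul]
  refine Finset.sum_congr rfl fun i _ => ?_
  rw [Finset.sum_eq_single i (fun j _ hji => by simp [hji.symm]) (by simp)]
  simp

lemma of_norm_sq_mem_doublyStochastic (W : unitaryGroup ι 𝕜) :
    (of fun i j => ‖W.1 i j‖ ^ 2) ∈ doublyStochastic ℝ ι := by
  have row_sum (W : unitaryGroup ι 𝕜) (i : ι) : ∑ j, ‖W.1 i j‖ ^ 2 = 1 := by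
    have := congrFun₂ (mem_unitaryGroup_iff.1 W.2) i i
    simp only [mul_apply, star_apply, one_apply_eq, RCLike.star_def, RCLike.mul_conj] at this
    exact_mod_cast this
  refine mem_doublyStochastic_iff_sum.2 ⟨fun i j => by simp, row_sum W, fun j => ?_⟩
  simpa using row_sum (star W) j

-- The right-hand side is affine in `D`, so by Birkhoff's theorem permutation matrices suffice.
lemma sum_sq_sub_le_of_mem_doublyStochastic {a b : ι → ℝ} (hab : Monovary a b)
    {D : Matrix ι ι ℝ} (hD : D ∈ doublyStochastic ℝ ι) :
    ∑ i, (a i - b i) ^ 2 ≤ ∑ i, ∑ j, D i j * (a i - b j) ^ 2 := by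
  obtain ⟨w, hw_nonneg, hw_sum, rfl⟩ := exists_eq_sum_perm_of_mem_doublyStochastic hD
  have cost_perm (σ : Equiv.Perm ι) :
      ∑ i, ∑ j, σ.permMatrix ℝ i j * (a i - b j) ^ 2 = ∑ i, (a i - b (σ i)) ^ 2 := by
    simp [Equiv.Perm.permMatrix, PEquiv.toMatrix_apply, Equiv.toPEquiv_apply, eq_comm]
  calc ∑ i, (a i - b i) ^ 2 = ∑ σ, w σ * ∑ i, (a i - b i) ^ 2 := by
        rw [← Finset.sum_mul, hw_sum, one_mul]
    _ ≤ ∑ σ, w σ * ∑ i, (a i - b (σ i)) ^ 2 := Finset.sum_le_sum fun σ _ =>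
        mul_le_mul_of_nonneg_left (sum_sq_sub_le_sum_sq_sub_comp_perm hab σ) (hw_nonneg σ)
    _ = ∑ i, ∑ j, (∑ σ, w σ • σ.permMatrix ℝ) i j * (a i - b j) ^ 2 := by
        simp_rw [← cost_perm, Matrix.sum_apply, Matrix.smul_apply, smul_eq_mul, Finset.sum_mul,
          Finset.mul_sum, mul_assoc]
        rw [Finset.sum_comm]
        exact Finset.sum_congr rfl fun i _ => Finset.sum_comm

lemma hoffman_wielandt (U V : unitaryGroup ι 𝕜) {a b : ι → ℝ} (hab : Monovary a b) :
    ∑ i, (a i - b i) ^ 2 ≤ ∑ i, ∑ j, ‖(unitaryDiag U a - unitaryDiag V b) i j‖ ^ 2 := by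
  refine (sum_sq_sub_le_of_mem_doublyStochastic hab
    (of_norm_sq_mem_doublyStochastic (star U * V))).trans_eq ?_
  have hW : ((star U * V : unitaryGroup ι 𝕜) : Matrix ι ι 𝕜) = star U.1 * V.1 := rfl
  have conj_sub : star U.1 * (unitaryDiag U a - unitaryDiag V b) * V.1 =
      diagonal (RCLike.ofReal ∘ a) * (star U.1 * V.1) -
        star U.1 * V.1 * diagonal (RCLike.ofReal ∘ b) := by
    rw [unitaryDiag_eq, unitaryDiag_eq, mul_sub, sub_mul, mul_assoc U.1,
      ← mul_assoc _ U.1, star_mul_self_of_mem U.2, one_mul]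
    simp only [mul_assoc, star_mul_self_of_mem V.2, mul_one]
  rw [← sum_norm_sq_unitary_mul_mul (star U) V, coe_star, conj_sub]
  refine Finset.sum_congr rfl fun i _ => Finset.sum_congr rfl fun j _ => ?_
  rw [Matrix.sub_apply, diagonal_mul, mul_diagonal, mul_comm _ (_ : 𝕜), ← mul_sub, norm_mul,
    mul_pow, of_apply, hW, Function.comp_apply, Function.comp_apply, ← RCLike.ofReal_sub,
    RCLike.norm_ofReal, sq_abs]

end HoffmanWielandt

section SortedSpectrum

open Filter Topology

variable {n : ℕ}

lemma eigs_monotone (H : Matrix (Fin n) (Fin n) ℂ) : Monotone (eigs H) := by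
  unfold eigs
  split_ifs
  · exact Tuple.monotone_sort _
  · exact monotone_const

lemma eigs_eq_eigenvalues_comp_sort {H : Matrix (Fin n) (Fin n) ℂ} (hH : H.IsHermitian) :
    eigs H = hH.eigenvalues ∘ Tuple.sort hH.eigenvalues :=
  dif_pos hH

lemma exists_eq_unitaryDiag_eigs {H : Matrix (Fin n) (Fin n) ℂ} (hH : H.IsHermitian) :
    ∃ U : unitaryGroup (Fin n) ℂ, H = unitaryDiag U (eigs H) := by
  obtain ⟨U, hU⟩ := exists_unitaryDiag_comp_perm hH.eigenvectorUnitary hH.eigenvalues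
    (Tuple.sort hH.eigenvalues)
  exact ⟨U, by rw [eigs_eq_eigenvalues_comp_sort hH, hU]; exact hH.spectral_theorem⟩

lemma eq_of_monotone_of_map_univ_eq {α : Type*} [LinearOrder α] {f g : Fin n → α}
    (hf : Monotone f) (hg : Monotone g)
    (h : Finset.univ.val.map f = Finset.univ.val.map g) : f = g := by
  rw [Fin.univ_val_map, Fin.univ_val_map, Multiset.coe_eq_coe] at h
  exact List.ofFn_injective (h.eq_of_sortedLE hf.sortedLE_ofFn hg.sortedLE_ofFn)

lemma eigs_unitaryDiag (U : unitaryGroup (Fin n) ℂ) {g : Fin n → ℝ} (hg : Monotone g) :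
    eigs (unitaryDiag U g) = g := by
  have hH := isHermitian_unitaryDiag U g
  refine eq_of_monotone_of_map_univ_eq (eigs_monotone _) hg ?_
  have roots_eq : (Finset.univ.val.map fun i => (hH.eigenvalues i : ℂ)) =
      Finset.univ.val.map fun i => (g i : ℂ) := by
    have := hH.roots_charpoly_eq_eigenvalues
    rw [charpoly_unitaryDiag, Polynomial.roots_prod _ _ (by
      simp [Finset.prod_ne_zero_iff, Polynomial.X_sub_C_ne_zero])] at this
    simpa [Function.comp_def] using this.symm
  rw [eigs_eq_eigenvalues_comp_sort hH, ← Multiset.map_map, Multiset.map_univ_val_equiv]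
  simpa [Multiset.map_map, Function.comp_def] using congrArg (Multiset.map Complex.re) roots_eq

lemma sum_comp_eigs {H : Matrix (Fin n) (Fin n) ℂ} (hH : H.IsHermitian) {M : Type*}
    [AddCommMonoid M] (f : ℝ → M) : ∑ i, f (hH.eigenvalues i) = ∑ i, f (eigs H i) := by
  rw [eigs_eq_eigenvalues_comp_sort hH]
  exact (Equiv.sum_comp (Tuple.sort hH.eigenvalues) fun i => f (hH.eigenvalues i)).symm

lemma spectrum_real_eq_range_eigs {H : Matrix (Fin n) (Fin n) ℂ} (hH : H.IsHermitian) :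
    spectrum ℝ H = Set.range (eigs H) := by
  rw [hH.spectrum_real_eq_range_eigenvalues, eigs_eq_eigenvalues_comp_sort hH,
    EquivLike.range_comp]

lemma frobNorm_sq (M : Matrix (Fin n) (Fin n) ℂ) :
    frobNorm M ^ 2 = ∑ i, ∑ j, ‖M i j‖ ^ 2 :=
  Real.sq_sqrt (by positivity)

lemma sum_sq_eigs_sub_le_frobNorm_sq {A B : Matrix (Fin n) (Fin n) ℂ} (hA : A.IsHermitian)
    (hB : B.IsHermitian) : ∑ i, (eigs A i - eigs B i) ^ 2 ≤ frobNorm (A - B) ^ 2 := by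
  obtain ⟨U, hU⟩ := exists_eq_unitaryDiag_eigs hA
  obtain ⟨V, hV⟩ := exists_eq_unitaryDiag_eigs hB
  have := hoffman_wielandt U V ((eigs_monotone A).monovary (eigs_monotone B))
  rwa [← hU, ← hV, ← frobNorm_sq] at this

lemma abs_eigs_sub_le_frobNorm {A B : Matrix (Fin n) (Fin n) ℂ} (hA : A.IsHermitian)
    (hB : B.IsHermitian) (i : Fin n) : |eigs A i - eigs B i| ≤ frobNorm (A - B) := by
  refine abs_le_of_sq_le_sq ?_ (Real.sqrt_nonneg _)
  exact (Finset.single_le_sum (f := fun i => (eigs A i - eigs B i) ^ 2)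
    (fun i _ => sq_nonneg _) (Finset.mem_univ i)).trans (sum_sq_eigs_sub_le_frobNorm_sq hA hB)

lemma continuous_frobNorm : Continuous (frobNorm : Matrix (Fin n) (Fin n) ℂ → ℝ) := by
  unfold frobNorm
  fun_prop

lemma continuousAt_eigs {X : Type*} [TopologicalSpace X] {x : X}
    {H : X → Matrix (Fin n) (Fin n) ℂ} (hcont : ContinuousAt H x)
    (hherm : ∀ᶠ y in 𝓝 x, (H y).IsHermitian) (i : Fin n) :
    ContinuousAt (fun y => eigs (H y) i) x := by
  have frob_tendsto : Tendsto (fun y => frobNorm (H y - H x)) (𝓝 x) (𝓝 0) := by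
    have : ContinuousAt (fun y => frobNorm (H y - H x)) x :=
      continuous_frobNorm.continuousAt.comp (hcont.sub continuousAt_const)
    simpa [ContinuousAt, frobNorm] using this
  refine tendsto_iff_dist_tendsto_zero.2 (squeeze_zero' (.of_forall fun _ => dist_nonneg) ?_
    frob_tendsto)
  filter_upwards [hherm] with y hy
  exact abs_eigs_sub_le_frobNorm hy hherm.self_of_nhds i

end SortedSpectrum

section LowestEigenvalues

open Filter Topology
open scoped MatrixOrder

variable {n k : ℕ} {c : ℝ} {H : Matrix (Fin n) (Fin n) ℂ}

/-- The lowest `k` eigenvalues of a Hermitian `n × n` matrix in increasing order, as a family over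
`Fin k` to which `sqDev` applies. -/
def lowEigs (hkn : k ≤ n) (H : Matrix (Fin n) (Fin n) ℂ) (i : Fin k) : ℝ :=
  eigs H (Fin.castLE hkn i)

lemma sum_ite_lt_eq_sum_castLE {M : Type*} [AddCommMonoid M] (hkn : k ≤ n) (f : Fin n → M) :
    (∑ j : Fin n, if (j : ℕ) < k then f j else 0) = ∑ i : Fin k, f (Fin.castLE hkn i) := by
  obtain ⟨m, rfl⟩ := Nat.exists_eq_add_of_le hkn
  simp [Fin.sum_univ_add, Fin.castAdd]

lemma lamBar_eq_mean_lowEigs (hkn : k ≤ n) (H : Matrix (Fin n) (Fin n) ℂ) :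
    lamBar k H = (∑ i, lowEigs hkn H i) / k := by
  rw [lamBar, sum_ite_lt_eq_sum_castLE hkn]
  rfl

lemma sum_sq_sub_lamBar_eq_sqDev (hkn : k ≤ n) (H : Matrix (Fin n) (Fin n) ℂ) :
    (∑ j : Fin n, if (j : ℕ) < k then (eigs H j - lamBar k H) ^ 2 else 0) =
      sqDev (lowEigs hkn H) := by
  rw [sum_ite_lt_eq_sum_castLE hkn, sqDev, Fintype.card_fin, lamBar_eq_mean_lowEigs hkn]
  rfl

/-- The level `c` separates the lowest `k` eigenvalues of `H` strictly from the others; nearby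
matrices keep the same gap level. -/
def IsGapLevel (k : ℕ) (c : ℝ) (H : Matrix (Fin n) (Fin n) ℂ) : Prop :=
  (∀ j : Fin n, (j : ℕ) < k → eigs H j < c) ∧ ∀ j : Fin n, k ≤ (j : ℕ) → c < eigs H j

lemma exists_isGapLevel_of_mem_sigmaSet (hk : 0 < k) (hkn : k < n) (hH : H ∈ SigmaSet n k) :
    ∃ c, IsGapLevel k c H := by
  obtain ⟨-, low_eq, low_lt⟩ := hH
  have hlt := low_lt ⟨0, hk.trans hkn⟩ ⟨k, hkn⟩ hk rfl
  obtain ⟨c, low_lt_c, c_lt⟩ := exists_between hlt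
  exact ⟨c, fun j hj => (low_eq j _ hj hk).trans_lt low_lt_c,
    fun j hj => c_lt.trans_le (eigs_monotone H hj)⟩

lemma eventually_isGapLevel {X : Type*} [TopologicalSpace X] {x : X}
    {H : X → Matrix (Fin n) (Fin n) ℂ} (hcont : ContinuousAt H x)
    (hherm : ∀ᶠ y in 𝓝 x, (H y).IsHermitian) (hgap : IsGapLevel k c (H x)) :
    ∀ᶠ y in 𝓝 x, IsGapLevel k c (H y) := by
  simp only [IsGapLevel, eventually_and, eventually_all]
  exact ⟨fun j hj => (continuousAt_eigs hcont hherm j).eventually_lt_const (hgap.1 j hj),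
    fun j hj => (continuousAt_eigs hcont hherm j).eventually_const_lt (hgap.2 j hj)⟩

lemma IsGapLevel.lamBar_lt (hk : 0 < k) (hkn : k ≤ n) (hgap : IsGapLevel k c H) :
    lamBar k H < c := by
  have : NeZero k := ⟨hk.ne'⟩
  rw [lamBar_eq_mean_lowEigs hkn, div_lt_iff₀ (by exact_mod_cast hk)]
  calc ∑ i, lowEigs hkn H i < ∑ _i : Fin k, c :=
        Finset.sum_lt_sum_of_nonempty Finset.univ_nonempty fun i _ => hgap.1 _ i.2
    _ = c * k := by simp [mul_comm]

lemma IsGapLevel.isUnit_sub (hgap : IsGapLevel k c H) (hH : H.IsHermitian) :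
    IsUnit (H - algebraMap ℝ _ c) := by
  rw [← neg_sub, IsUnit.neg_iff, ← spectrum.notMem_iff, spectrum_real_eq_range_eigs hH]
  rintro ⟨j, rfl⟩
  rcases lt_or_ge (j : ℕ) k with hj | hj
  · exact (hgap.1 j hj).false
  · exact (hgap.2 j hj).false

lemma negPart_sub_pow_eq_cfc (hH : H.IsHermitian) (c : ℝ) (m : ℕ) :
    (H - algebraMap ℝ _ c)⁻ ^ m = cfc (fun x => (x - c)⁻ ^ m) H := by
  have hsa : IsSelfAdjoint H := hH
  have sub_eq : H - algebraMap ℝ _ c = cfc (fun x => x - c) H := by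
    rw [cfc_sub (fun x : ℝ => x) (fun _ => c) H, cfc_id' ℝ H, cfc_const c H]
  have hneg : Continuous fun x : ℝ => x⁻ := by simp only [negPart_def]; fun_prop
  have hneg_sub : Continuous fun x : ℝ => (x - c)⁻ := hneg.comp (continuous_sub_right c)
  rw [CFC.negPart_def, sub_eq, cfcₙ_eq_cfc (hf := hneg.continuousOn) (hf0 := by simp),
    ← cfc_comp' (fun x : ℝ => x⁻) (fun x => x - c) H (hg := hneg.continuousOn),
    ← cfc_pow _ _ _ hneg_sub.continuousOn]

lemma IsGapLevel.trace_negPart_pow (hkn : k ≤ n) (hgap : IsGapLevel k c H) (hH : H.IsHermitian)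
    {m : ℕ} (hm : m ≠ 0) :
    ((H - algebraMap ℝ _ c)⁻ ^ m).trace = ((∑ i, (c - lowEigs hkn H i) ^ m : ℝ) : ℂ) := by
  rw [negPart_sub_pow_eq_cfc hH, trace_cfc hH, ← RCLike.ofReal_sum, sum_comp_eigs hH fun x =>
    (x - c)⁻ ^ m]
  refine congrArg _ ((Finset.sum_congr rfl fun j _ => ?_).trans
    (sum_ite_lt_eq_sum_castLE hkn fun j => (c - eigs H j) ^ m))
  split_ifs with hj
  · rw [negPart_of_nonpos (sub_nonpos.2 (hgap.1 j hj).le), neg_sub]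
  · rw [negPart_of_nonneg (sub_nonneg.2 (hgap.2 j (not_lt.1 hj)).le), zero_pow hm]

variable {E : Type*} [NormedAddCommGroup E] [NormedSpace ℝ E] {x : E}

lemma analyticAt_sum_pow_lowEigs (hkn : k ≤ n) {H : E → Matrix (Fin n) (Fin n) ℂ}
    (hH : AnalyticAt ℝ H x) (hherm : ∀ᶠ y in 𝓝 x, (H y).IsHermitian)
    (hgap : IsGapLevel k c (H x)) {m : ℕ} (hm : m ≠ 0) :
    AnalyticAt ℝ (fun y => ∑ i, (c - lowEigs hkn (H y) i) ^ m) x := by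
  have negPart_analytic : AnalyticAt ℝ (fun y => (H y - algebraMap ℝ _ c)⁻) x :=
    analyticAt_negPart (hH.sub analyticAt_const) (hgap.isUnit_sub hherm.self_of_nhds) <| by
      filter_upwards [hherm] with y hy
      exact hy.sub (IsSelfAdjoint.algebraMap _ (.all c))
  let reTrace : Matrix (Fin n) (Fin n) ℂ →L[ℝ] ℝ :=
    LinearMap.toContinuousLinearMap (Complex.reLm.comp (traceLinearMap (Fin n) ℝ ℂ))
  refine ((reTrace.analyticAt _).comp (analyticAt_matrix_pow negPart_analytic m)).congr ?_
  filter_upwards [hherm, eventually_isGapLevel hH.continuousAt hherm hgap] with y hy hgap_y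
  exact congrArg Complex.re (hgap_y.trace_negPart_pow hkn hy hm)

lemma analyticAt_sqDev_lowEigs (hkn : k ≤ n) {H : E → Matrix (Fin n) (Fin n) ℂ}
    (hH : AnalyticAt ℝ H x) (hherm : ∀ᶠ y in 𝓝 x, (H y).IsHermitian)
    (hgap : IsGapLevel k c (H x)) : AnalyticAt ℝ (fun y => sqDev (lowEigs hkn (H y))) x := by
  have sum_sq := analyticAt_sum_pow_lowEigs hkn hH hherm hgap two_ne_zero
  have sum := analyticAt_sum_pow_lowEigs hkn hH hherm hgap one_ne_zero
  have sq_sum_div : AnalyticAt ℝ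
      (fun y => (∑ i, (c - lowEigs hkn (H y) i) ^ 1) ^ 2 / (k : ℝ)) x := (sum.fun_pow 2).div_const
  refine (sum_sq.fun_sub sq_sum_div).congr (.of_forall fun y => ?_)
  simp [sqDev_eq_sub _ c, ← neg_sub c, -neg_sub]

end LowestEigenvalues

section DistanceToSigma

open Filter Topology

variable {n k : ℕ} {c : ℝ} {H : Matrix (Fin n) (Fin n) ℂ}

lemma sqDev_lowEigs_le_frobNorm_sq (hk : 0 < k) (hkn : k ≤ n) (hH : H.IsHermitian)
    {G : Matrix (Fin n) (Fin n) ℂ} (hG : G ∈ SigmaSet n k) :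
    sqDev (lowEigs hkn H) ≤ frobNorm (H - G) ^ 2 := by
  obtain ⟨hG_herm, low_eq, -⟩ := hG
  calc sqDev (lowEigs hkn H) ≤ ∑ i, (lowEigs hkn H i - eigs G ⟨0, hk.trans_le hkn⟩) ^ 2 :=
        sqDev_le _ _
    _ = ∑ i : Fin k, (eigs H (Fin.castLE hkn i) - eigs G (Fin.castLE hkn i)) ^ 2 :=
        Finset.sum_congr rfl fun i _ => by rw [lowEigs, low_eq _ (Fin.castLE hkn i) hk i.2]
    _ ≤ ∑ j, (eigs H j - eigs G j) ^ 2 := by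
        rw [← sum_ite_lt_eq_sum_castLE hkn fun j => (eigs H j - eigs G j) ^ 2]
        exact Finset.sum_le_sum fun j _ => by
          split_ifs
          exacts [le_rfl, sq_nonneg _]
    _ ≤ frobNorm (H - G) ^ 2 := sum_sq_eigs_sub_le_frobNorm_sq hH hG_herm

/-- The eigenvalues of `H`, with the lowest `k` of them replaced by their mean: the spectrum of a
point of `SigmaSet n k` nearest to `H`. -/
def meanLowEigs (k : ℕ) (H : Matrix (Fin n) (Fin n) ℂ) (j : Fin n) : ℝ :=
  if (j : ℕ) < k then lamBar k H else eigs H j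

lemma monotone_meanLowEigs (hlow : lamBar k H < c) (hgap : IsGapLevel k c H) :
    Monotone (meanLowEigs k H) := by
  intro i j hij
  unfold meanLowEigs
  split_ifs with hi hj hj
  · exact le_rfl
  · exact (hlow.trans (hgap.2 j (not_lt.1 hj))).le
  · exact absurd ((Fin.le_def.1 hij).trans_lt hj) hi
  · exact eigs_monotone H hij

lemma unitaryDiag_meanLowEigs_mem_sigmaSet (hlow : lamBar k H < c) (hgap : IsGapLevel k c H)
    (U : unitaryGroup (Fin n) ℂ) : unitaryDiag U (meanLowEigs k H) ∈ SigmaSet n k := by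
  refine ⟨isHermitian_unitaryDiag _ _, ?_⟩
  rw [eigs_unitaryDiag U (monotone_meanLowEigs hlow hgap)]
  refine ⟨fun i j hi hj => by simp [meanLowEigs, hi, hj], fun i j hi hj => ?_⟩
  simpa [meanLowEigs, hi, hj] using hlow.trans (hgap.2 j hj.ge)

lemma frobNorm_sub_unitaryDiag_meanLowEigs_sq (hkn : k ≤ n) {U : unitaryGroup (Fin n) ℂ}
    (hU : H = unitaryDiag U (eigs H)) :
    frobNorm (H - unitaryDiag U (meanLowEigs k H)) ^ 2 = sqDev (lowEigs hkn H) := by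
  have sub_eq : H - unitaryDiag U (meanLowEigs k H) =
      unitaryDiag U (eigs H - meanLowEigs k H) := by rw [← unitaryDiag_sub, ← hU]
  rw [sub_eq, frobNorm_sq, sum_norm_sq_unitaryDiag, ← sum_sq_sub_lamBar_eq_sqDev hkn]
  refine Finset.sum_congr rfl fun j _ => ?_
  simp only [Pi.sub_apply, meanLowEigs]
  split_ifs <;> simp

lemma sInf_frobNorm_sub_sq (hk : 0 < k) (hkn : k ≤ n) (hH : H.IsHermitian)
    (hgap : IsGapLevel k c H) :
    sInf ((fun G => frobNorm (H - G)) '' SigmaSet n k) ^ 2 = sqDev (lowEigs hkn H) := by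
  obtain ⟨U, hU⟩ := exists_eq_unitaryDiag_eigs hH
  have sq_eq := frobNorm_sub_unitaryDiag_meanLowEigs_sq hkn hU
  have isLeast : IsLeast ((fun G => frobNorm (H - G)) '' SigmaSet n k)
      (frobNorm (H - unitaryDiag U (meanLowEigs k H))) := by
    refine ⟨Set.mem_image_of_mem _
      (unitaryDiag_meanLowEigs_mem_sigmaSet (hgap.lamBar_lt hk hkn) hgap U), ?_⟩
    rintro _ ⟨G, hG, rfl⟩
    refine le_of_sq_le_sq ?_ (Real.sqrt_nonneg _)
    exact sq_eq.trans_le (sqDev_lowEigs_le_frobNorm_sq hk hkn hH hG)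
  rw [isLeast.csInf_eq, sq_eq]

lemma eventually_sInf_frobNorm_sub_sq {X : Type*} [TopologicalSpace X] {x : X} (hk : 0 < k)
    (hkn : k ≤ n) {H : X → Matrix (Fin n) (Fin n) ℂ} (hcont : ContinuousAt H x)
    (hherm : ∀ᶠ y in 𝓝 x, (H y).IsHermitian) (hgap : IsGapLevel k c (H x)) :
    ∀ᶠ y in 𝓝 x, sInf ((fun G => frobNorm (H y - G)) '' SigmaSet n k) ^ 2 =
      sqDev (lowEigs hkn (H y)) := by
  filter_upwards [hherm, eventually_isGapLevel hcont hherm hgap] with y hy hgap_y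
  exact sInf_frobNorm_sub_sq hk hkn hy hgap_y

end DistanceToSigma

theorem order_distancing_eq_order_splitting_general {n k : ℕ} (hk : 0 < k) (hkn : k ≤ n)
    {H : ℝ → Matrix (Fin n) (Fin n) ℂ} (hH : AnalyticAt ℝ H 0)
    (hherm : ∀ᶠ t in nhds 0, (H t).IsHermitian) {c : ℝ} (hgap : IsGapLevel k c (H 0)) :
    (∃ ε > 0, ∀ t : ℝ, |t| < ε →
      (sInf ((fun G => frobNorm (H t - G)) '' SigmaSet n k)) ^ 2
        = ∑ j : Fin n, if (j : ℕ) < k then (eigs (H t) j - lamBar k (H t)) ^ 2 else 0) ∧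
    AnalyticAt ℝ (fun t => (sInf ((fun G => frobNorm (H t - G)) '' SigmaSet n k)) ^ 2) 0 ∧
    ∀ lt : Fin k → ℝ → ℝ, (∀ i, AnalyticAt ℝ (lt i) 0) →
      (∃ ε > 0, ∀ t : ℝ, |t| < ε →
        (Finset.univ.val.map fun i : Fin k => lt i t)
          = Finset.univ.val.map fun i : Fin k =>
              eigs (H t) ⟨(i : ℕ), lt_of_lt_of_le i.2 hkn⟩) →
      ord0 (fun t => (sInf ((fun G => frobNorm (H t - G)) '' SigmaSet n k)) ^ 2)
        = 2 * ⨅ (i : Fin k) (j : Fin k) (_ : i < j), ord0 (fun t => lt i t - lt j t) := by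
  have dist_sq := eventually_sInf_frobNorm_sub_sq hk hkn hH.continuousAt hherm hgap
  have dist_sq_analytic := (analyticAt_sqDev_lowEigs hkn hH hherm hgap).congr
    (Filter.EventuallyEq.symm dist_sq)
  refine ⟨?_, dist_sq_analytic, fun lt lt_analytic eigs_eq => ?_⟩
  · simpa only [sum_sq_sub_lamBar_eq_sqDev hkn, Metric.eventually_nhds_iff, Real.dist_0_eq_abs]
      using dist_sq
  have eigs_eq : ∀ᶠ t in nhds 0, Finset.univ.val.map (fun i => lt i t) =
      Finset.univ.val.map (lowEigs hkn (H t)) := by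
    simpa only [Metric.eventually_nhds_iff, Real.dist_0_eq_abs] using! eigs_eq
  have dist_sq_eq : (fun t => sInf ((fun G => frobNorm (H t - G)) '' SigmaSet n k) ^ 2)
      =ᶠ[nhds 0] fun t => sqDev fun i => lt i t := by
    filter_upwards [dist_sq, eigs_eq] with t ht heigs
    exact ht.trans (sqDev_eq_of_map_univ_eq heigs).symm
  simp only [ord0_eq_analyticOrderAt dist_sq_analytic, analyticOrderAt_congr dist_sq_eq,
    analyticOrderAt_sqDev lt_analytic,
    ord0_eq_analyticOrderAt ((lt_analytic _).fun_sub (lt_analytic _))]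

/-- **Order of distancing equals order of energy splitting:** for an analytic one-parameter
Hermitian family `H(t)` with `H(0) ∈ Σ_k`, for small `t` the squared distance to `Σ_k` equals
`Σ_{j≤k} (λ_j(H(t)) − λ̄(t))²`, it is real-analytic at `0`, and its order at `0` is twice the
minimal order of the pairwise differences of the (analytically re-indexed) lowest `k`
eigenvalues. -/
theorem order_distancing_eq_order_splitting {n k : ℕ} (hk2 : 2 ≤ k) (hkn : k < n)
    (H : ℝ → Matrix (Fin n) (Fin n) ℂ) (δ : ℝ) (hδ : 0 < δ)
    (hanal : AnalyticOnNhd ℝ H (Set.Ioo (-δ) δ))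
    (hherm : ∀ t ∈ Set.Ioo (-δ) δ, (H t).IsHermitian)
    (h0 : H 0 ∈ SigmaSet n k) :
    (∃ ε > 0, ∀ t : ℝ, |t| < ε →
      (sInf ((fun G => frobNorm (H t - G)) '' SigmaSet n k)) ^ 2
        = ∑ j : Fin n, if (j : ℕ) < k then (eigs (H t) j - lamBar k (H t)) ^ 2 else 0) ∧
    AnalyticAt ℝ (fun t => (sInf ((fun G => frobNorm (H t - G)) '' SigmaSet n k)) ^ 2) 0 ∧
    ∀ lt : Fin k → ℝ → ℝ, (∀ i, AnalyticAt ℝ (lt i) 0) →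
      (∃ ε > 0, ∀ t : ℝ, |t| < ε →
        (Finset.univ.val.map fun i : Fin k => lt i t)
          = Finset.univ.val.map fun i : Fin k =>
              eigs (H t) ⟨(i : ℕ), lt_of_lt_of_le i.2 hkn.le⟩) →
      ord0 (fun t => (sInf ((fun G => frobNorm (H t - G)) '' SigmaSet n k)) ^ 2)
        = 2 * ⨅ (i : Fin k) (j : Fin k) (_ : i < j), ord0 (fun t => lt i t - lt j t) := by
  have h0_mem : Set.Ioo (-δ) δ ∈ nhds 0 := Ioo_mem_nhds (neg_lt_zero.2 hδ) hδ
  obtain ⟨c, hgap⟩ := exists_isGapLevel_of_mem_sigmaSet (two_pos.trans_le hk2) hkn h0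
  exact order_distancing_eq_order_splitting_general (two_pos.trans_le hk2) hkn.le
    (hanal 0 (mem_of_mem_nhds h0_mem)) (Filter.eventually_of_mem h0_mem hherm) hgap

end
end

section
/- Let 2 ≤ k < n, let H ∈ Herm(n) satisfy λ_k(H) < λ_{k+1}(H), and let U be a unitary with U⁻¹HU = diag(λ_1(H),…,λ_n(H)). Then for every K ∈ Herm(n) such that the upper-left k×k block of U⁻¹KU is a real scalar multiple of the k×k identity, tr((H − H_Σ)·K) = 0; i.e., the line joining H and H_Σ is Frobenius-orthogonal to the tangent space of Σ_k at H_Σ. -/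
open Matrix

noncomputable section

/-- `Λ_Σ`: the diagonal of sorted eigenvalues, with the lowest k entries replaced
by their mean. -/
def LambdaSigma {n : ℕ} (k : ℕ) (H : Matrix (Fin n) (Fin n) ℂ) : Matrix (Fin n) (Fin n) ℂ :=
  Matrix.diagonal fun i => if (i : ℕ) < k then (lamBar k H : ℂ) else (eigs H i : ℂ)

/-!
Since `U⁻¹ * H * U` and `LambdaSigma k H` are diagonal, conjugating by `U` reduces the trace to
`∑ i, (λ i - λ' i) * (U⁻¹ * K * U) i i`, where `λ'` replaces the first `k` entries of `λ` by their
mean. The factor `λ i - λ' i` vanishes for `i ≥ k`, and `(U⁻¹ * K * U) i i` is a constant `c` for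
`i < k`, so the sum is `c` times the sum of the deviations of the first `k` eigenvalues from their
mean, which is zero.
-/

open scoped BigOperators

section AverageOn

variable {ι M R : Type*} [DecidableEq ι]

/-- The family `d` with its entries over `s` replaced by their mean: the operation that turns the
eigenvalues of `H` into those of `H_Σ`, where `s` consists of the first `k` indices. -/
def averageOn [AddCommMonoid M] [Module ℚ≥0 M] (s : Finset ι) (d : ι → M) : ι → M :=
  s.piecewise (fun _ => 𝔼 j ∈ s, d j) d

lemma sum_sub_averageOn_eq_zero [AddCommGroup M] [Module ℚ≥0 M] (s : Finset ι) (d : ι → M) :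
    ∑ i ∈ s, (d i - averageOn s d i) = 0 := by
  have h_mean : ∑ i ∈ s, averageOn s d i = ∑ i ∈ s, d i :=
    calc ∑ i ∈ s, averageOn s d i = ∑ _i ∈ s, 𝔼 j ∈ s, d j :=
          Finset.sum_congr rfl fun _ hi => s.piecewise_eq_of_mem _ _ hi
      _ = ∑ i ∈ s, d i := by rw [Finset.sum_const, Finset.card_smul_expect]
  rw [Finset.sum_sub_distrib, h_mean, sub_self]

variable [Fintype ι]

lemma sum_sub_averageOn_mul_eq_zero [NonUnitalNonAssocRing R] [Module ℚ≥0 R]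
    {s : Finset ι} (d : ι → R) {m : ι → R} {c : R} (hm : ∀ i ∈ s, m i = c) :
    ∑ i, (d i - averageOn s d i) * m i = 0 := by
  have h_off : ∀ i ∉ s, (d i - averageOn s d i) * m i = 0 := fun i hi => by
    rw [averageOn, s.piecewise_eq_of_notMem _ _ hi, sub_self, zero_mul]
  calc ∑ i, (d i - averageOn s d i) * m i
      = ∑ i ∈ s, (d i - averageOn s d i) * m i :=
        (Finset.sum_subset s.subset_univ fun i _ hi => h_off i hi).symm
    _ = (∑ i ∈ s, (d i - averageOn s d i)) * c := by
        rw [Finset.sum_mul]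
        exact Finset.sum_congr rfl fun i hi => by rw [hm i hi]
    _ = 0 := by rw [sum_sub_averageOn_eq_zero, zero_mul]

lemma trace_diagonal_mul [NonUnitalNonAssocSemiring R] (d : ι → R) (B : Matrix ι ι R) :
    trace (diagonal d * B) = ∑ i, d i * B i i := by
  simp only [trace, diag_apply, diagonal_mul]

lemma trace_mul_eq_trace_conj_mul_conj [CommRing R] {P : Matrix ι ι R} (hP : IsUnit P)
    (A B : Matrix ι ι R) :
    trace (A * B) = trace ((P⁻¹ * A * P) * (P⁻¹ * B * P)) := by
  have hP_det : IsUnit P.det := P.isUnit_iff_isUnit_det.mp hP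
  rw [← trace_conj' hP (A * B)]
  simp only [Matrix.mul_assoc, mul_nonsing_inv_cancel_left _ _ hP_det]

lemma trace_sub_conj_averageOn_mul_eq_zero [CommRing R] [Module ℚ≥0 R] {s : Finset ι} {d : ι → R}
    {A B P : Matrix ι ι R} {c : R} (hP : IsUnit P) (hA : P⁻¹ * A * P = diagonal d)
    (hB : ∀ i ∈ s, (P⁻¹ * B * P) i i = c) :
    trace ((A - P * diagonal (averageOn s d) * P⁻¹) * B) = 0 := by
  have hP_det : IsUnit P.det := P.isUnit_iff_isUnit_det.mp hP
  have h_conj : P⁻¹ * (A - P * diagonal (averageOn s d) * P⁻¹) * P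
      = diagonal fun i => d i - averageOn s d i := by
    rw [← diagonal_sub, ← hA]
    simp only [Matrix.mul_sub, Matrix.sub_mul, Matrix.mul_assoc, nonsing_inv_mul _ hP_det,
      nonsing_inv_mul_cancel_left _ _ hP_det, Matrix.mul_one]
  rw [trace_mul_eq_trace_conj_mul_conj hP, h_conj, trace_diagonal_mul,
    sum_sub_averageOn_mul_eq_zero d hB]

end AverageOn

lemma lamBar_eq_expect {n k : ℕ} (hkn : k ≤ n) (H : Matrix (Fin n) (Fin n) ℂ) :
    lamBar k H = 𝔼 j ∈ {j : Fin n | (j : ℕ) < k}, eigs H j := by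
  rw [lamBar, Finset.expect_eq_sum_div_card, Fin.card_filter_val_lt, min_eq_right hkn,
    Finset.sum_filter]

lemma LambdaSigma_eq_diagonal_averageOn {n k : ℕ} (hkn : k ≤ n) (H : Matrix (Fin n) (Fin n) ℂ) :
    LambdaSigma k H = diagonal (averageOn {i : Fin n | (i : ℕ) < k} fun i => (eigs H i : ℂ)) := by
  have h_mean : (lamBar k H : ℂ) = 𝔼 j ∈ {j : Fin n | (j : ℕ) < k}, (eigs H j : ℂ) := by
    rw [lamBar_eq_expect hkn]
    exact map_expect Complex.ofRealHom _ _
  rw [LambdaSigma, h_mean]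
  congr 1 with i
  simp only [averageOn, Finset.piecewise, Finset.mem_filter_univ]

theorem HSigma_orthogonal_tangent_general {n k : ℕ} (hkn : k ≤ n)
    (H U : Matrix (Fin n) (Fin n) ℂ) (hU : IsUnit U)
    (hdiag : U⁻¹ * H * U = Matrix.diagonal fun i => (eigs H i : ℂ))
    (K : Matrix (Fin n) (Fin n) ℂ) {c : ℂ}
    (hKdiag : ∀ i : Fin n, (i : ℕ) < k → (U⁻¹ * K * U) i i = c) :
    Matrix.trace ((H - U * LambdaSigma k H * U⁻¹) * K) = 0 := by
  rw [LambdaSigma_eq_diagonal_averageOn hkn]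
  exact trace_sub_conj_averageOn_mul_eq_zero hU hdiag fun i hi =>
    hKdiag i ((Finset.mem_filter_univ i).mp hi)

/-- **The line joining `H` and `H_Σ` is Frobenius-orthogonal to the tangent space of `Σ_k`
at `H_Σ`:** for every Hermitian `K` whose upper-left `k × k` block in the eigenbasis of `H`
is a real scalar matrix, `tr((H − H_Σ)·K) = 0`. -/
theorem HSigma_orthogonal_tangent {n k : ℕ} (hk2 : 2 ≤ k) (hkn : k < n)
    (H : Matrix (Fin n) (Fin n) ℂ) (hH : H.IsHermitian)
    (hgap : eigs H ⟨k - 1, by omega⟩ < eigs H ⟨k, hkn⟩)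
    (U : Matrix (Fin n) (Fin n) ℂ) (hU : U ∈ Matrix.unitaryGroup (Fin n) ℂ)
    (hdiag : U⁻¹ * H * U = Matrix.diagonal fun i => (eigs H i : ℂ))
    (K : Matrix (Fin n) (Fin n) ℂ) (hK : K.IsHermitian)
    (hKblock : ∃ c : ℝ, ∀ a b : Fin n, (a : ℕ) < k → (b : ℕ) < k →
      (U⁻¹ * K * U) a b = if a = b then (c : ℂ) else 0) :
    Matrix.trace ((H - U * LambdaSigma k H * U⁻¹) * K) = 0 := by
  obtain ⟨c, hc⟩ := hKblock
  exact HSigma_orthogonal_tangent_general hkn.le H U (Unitary.isUnit_coe (U := ⟨U, hU⟩)) hdiag K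
    fun i hi => (hc i i hi hi).trans (if_pos rfl)

end
end
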